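/- Central-charge part of the coincidences C_{psi,2C}(n,m) ≅ W_s(sp_{2r}) (Appendix B, type 2C): for all integers m, n ≥ 0 and r ≥ 1, the identity c2C(n,m,psi) = csp(r,t) holds in each of the following six cases, whenever psi is not 0 or 1/2, t ≠ 0, and all displayed denominators are nonzero: (1) psi = (1+m+n+r)/(1+2*m), t = (1+m+n+r)/(1+2*n+2*r); (2) psi = (1+m+n)/(1+2*m+2*r), t = (1+2*m+2*r)/(2*(2*r-2*n-1)); (3) psi = (1+2*m+2*n+2*r)/(2*(2*m-1)), t = (1+n+r)/(1+2*m+2*n+2*r); (4) psi = (m+n)/(2*(m+r)), t = (r-n)/(2*(m+r)); (5) psi = (m+n-r)/(2*(m-r)), t = (r-m-n)/(2*(r-m)) with r ≠ m; (6) psi = (1+2*m+2*n-2*r)/(2*(2*m-2*r-1)), t = (1-2*m+2*r)/(2*(2*r-2*m-2*n-1)). -/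

import Mathlib

noncomputable def c2C (n m psi : ℝ) : ℝ :=
  -((-m - n + 2 * m * psi) * (-1 - m - n + psi + 2 * m * psi) * (-1 - 2 * m - 2 * n - 2 * psi + 4 * m * psi)) / (psi * (2 * psi - 1))

noncomputable def csp (r t : ℝ) : ℝ :=
  -(r * ((2 * r + 1) * t - r - 1) * ((4 * r - 2) * t - 2 * r - 1)) / t

/-!
With `x = 2 m ψ - m - n`, the central charge `c2C n m ψ` depends only on `(x, ψ)`, and this function
is invariant under `(x, ψ) ↦ (x, 1/2 - ψ)` and `(x, ψ) ↦ ((1 + 2 ψ - 2 x) / (4 ψ), 1 / (4 ψ))`.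
The two involutions generate a copy of `S₃`, acting on `2 ψ` as the anharmonic group. The charge
`csp r t` is the value of the same function at `(r (2 t - 1), t)`, and the six coincidences are the
six elements of `S₃`: each moves `(x, ψ)` to `(r (2 t - 1), t)`. In terms of `ψ`, they occur when
one of the three factors of the numerator of `c2C n m ψ` is a constant multiple of `r`, `r ψ` or
`r (2 ψ - 1)`.
-/

/-- The common form of the central charges `c2C` and `csp`, as a function of the level `psi` and of
a second coordinate `x`, which stands for `2 * m * psi - m - n`. It is used because the triality
symmetries are simple in these coordinates. -/
noncomputable def trialityCharge (x psi : ℝ) : ℝ :=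
  -(x * (x + psi - 1) * (2 * x - 1 - 2 * psi)) / (psi * (2 * psi - 1))

lemma c2C_eq_trialityCharge (n m psi : ℝ) :
    c2C n m psi = trialityCharge (2 * m * psi - m - n) psi := by
  rw [c2C, trialityCharge]
  congr 1
  ring

lemma csp_eq_trialityCharge (r : ℝ) {t u : ℝ} (ht : 2 * t - 1 = u) (hu : u ≠ 0) :
    csp r t = trialityCharge (r * u) t := by
  rw [csp, trialityCharge, ht, ← mul_div_mul_right _ t hu, ← ht]
  congr 1
  ring

lemma trialityCharge_half_sub (x psi : ℝ) :
    trialityCharge x (1 / 2 - psi) = trialityCharge x psi := by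
  unfold trialityCharge
  congr 1 <;> ring

section Triality

variable {psi : ℝ}

lemma trialityCharge_inv (x : ℝ) (hpsi : psi ≠ 0) :
    trialityCharge ((1 + 2 * psi - 2 * x) / (4 * psi)) (1 / (4 * psi)) =
      trialityCharge x psi := by
  have hscale : -1 / (8 * psi ^ 3) ≠ 0 := by simp [hpsi]
  unfold trialityCharge
  rw [← mul_div_mul_left _ (psi * (2 * psi - 1)) hscale]
  congr 1 <;> field_simp <;> ring

lemma trialityCharge_half_sub_inv (x : ℝ) (hpsi : psi ≠ 0) :
    trialityCharge ((1 + 2 * psi - 2 * x) / (4 * psi)) ((2 * psi - 1) / (4 * psi)) =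
      trialityCharge x psi := by
  have ht : (2 * psi - 1) / (4 * psi) = 1 / 2 - 1 / (4 * psi) := by
    field_simp
    ring
  rw [ht, trialityCharge_half_sub, trialityCharge_inv x hpsi]

lemma trialityCharge_inv_half_sub (x : ℝ) (hpsi : 2 * psi - 1 ≠ 0) :
    trialityCharge ((x + psi - 1) / (2 * psi - 1)) (-1 / (2 * (2 * psi - 1))) =
      trialityCharge x psi := by
  have hdual : 1 / 2 - psi ≠ 0 := fun h ↦ hpsi (by linear_combination -2 * h)
  have hx : (x + psi - 1) / (2 * psi - 1) =
      (1 + 2 * (1 / 2 - psi) - 2 * x) / (4 * (1 / 2 - psi)) := by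
    rw [div_eq_div_iff hpsi (mul_ne_zero four_ne_zero hdual)]
    ring
  have ht : -1 / (2 * (2 * psi - 1)) = 1 / (4 * (1 / 2 - psi)) := by
    rw [div_eq_div_iff (mul_ne_zero two_ne_zero hpsi) (mul_ne_zero four_ne_zero hdual)]
    ring
  rw [hx, ht, trialityCharge_inv x hdual, trialityCharge_half_sub]

lemma trialityCharge_half_sub_inv_half_sub (x : ℝ) (hpsi : 2 * psi - 1 ≠ 0) :
    trialityCharge ((x + psi - 1) / (2 * psi - 1)) (psi / (2 * psi - 1)) =
      trialityCharge x psi := by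
  have ht : psi / (2 * psi - 1) = 1 / 2 - -1 / (2 * (2 * psi - 1)) := by
    rw [← div_div]
    linear_combination 1 / 2 * div_self hpsi
  rw [ht, trialityCharge_half_sub, trialityCharge_inv_half_sub x hpsi]

end Triality

section Coincidences

variable {n m r psi : ℝ}

lemma c2C_eq_csp_self (hpsi : 2 * psi - 1 ≠ 0)
    (h : 2 * m * psi - (m + n) = r * (2 * psi - 1)) :
    c2C n m psi = csp r psi := by
  rw [c2C_eq_trialityCharge, csp_eq_trialityCharge r rfl hpsi, sub_sub, h]

lemma c2C_eq_csp_half_sub (hpsi : psi ≠ 0) (h : 2 * m * psi - (m + n) = r * (-2 * psi)) :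
    c2C n m psi = csp r (1 / 2 - psi) := by
  have hu : 2 * (1 / 2 - psi) - 1 = -2 * psi := by ring
  rw [c2C_eq_trialityCharge, csp_eq_trialityCharge r hu (by simpa using hpsi),
    trialityCharge_half_sub, sub_sub, h]

lemma c2C_eq_csp_inv (hpsi : psi ≠ 0) (hpsi' : 2 * psi - 1 ≠ 0)
    (h : (4 * m - 2) * psi - (1 + 2 * m + 2 * n) = 2 * r * (2 * psi - 1)) :
    c2C n m psi = csp r (1 / (4 * psi)) := by
  have hu : 2 * (1 / (4 * psi)) - 1 = -(2 * psi - 1) / (2 * psi) := by field_simp; ring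
  have hx : (1 + 2 * psi - 2 * (2 * m * psi - m - n)) / (4 * psi) =
      r * (-(2 * psi - 1) / (2 * psi)) := by
    field_simp
    linear_combination -2 * h
  rw [c2C_eq_trialityCharge,
    csp_eq_trialityCharge r hu (div_ne_zero (neg_ne_zero.mpr hpsi') (by simpa using hpsi)),
    ← hx, trialityCharge_inv _ hpsi]

lemma c2C_eq_csp_half_sub_inv (hpsi : psi ≠ 0)
    (h : (4 * m - 2) * psi - (1 + 2 * m + 2 * n) = 2 * r) :
    c2C n m psi = csp r ((2 * psi - 1) / (4 * psi)) := by
  have hu : 2 * ((2 * psi - 1) / (4 * psi)) - 1 = -1 / (2 * psi) := by field_simp; ring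
  have hx : (1 + 2 * psi - 2 * (2 * m * psi - m - n)) / (4 * psi) = r * (-1 / (2 * psi)) := by
    field_simp
    linear_combination -2 * h
  rw [c2C_eq_trialityCharge, csp_eq_trialityCharge r hu (by simpa using hpsi), ← hx,
    trialityCharge_half_sub_inv _ hpsi]

lemma c2C_eq_csp_inv_half_sub (hpsi : psi ≠ 0) (hpsi' : 2 * psi - 1 ≠ 0)
    (h : (2 * m + 1) * psi - (1 + m + n) = -2 * r * psi) :
    c2C n m psi = csp r (-1 / (2 * (2 * psi - 1))) := by
  have hu : 2 * (-1 / (2 * (2 * psi - 1))) - 1 = -2 * psi / (2 * psi - 1) := by field_simp; ring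
  have hx : (2 * m * psi - m - n + psi - 1) / (2 * psi - 1) =
      r * (-2 * psi / (2 * psi - 1)) := by
    field_simp
    linear_combination h
  rw [c2C_eq_trialityCharge,
    csp_eq_trialityCharge r hu (div_ne_zero (by simpa using hpsi) hpsi'), ← hx,
    trialityCharge_inv_half_sub _ hpsi']

lemma c2C_eq_csp_half_sub_inv_half_sub (hpsi : 2 * psi - 1 ≠ 0)
    (h : (2 * m + 1) * psi - (1 + m + n) = r) :
    c2C n m psi = csp r (psi / (2 * psi - 1)) := by
  have hu : 2 * (psi / (2 * psi - 1)) - 1 = 1 / (2 * psi - 1) := by field_simp; ring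
  have hx : (2 * m * psi - m - n + psi - 1) / (2 * psi - 1) = r * (1 / (2 * psi - 1)) := by
    field_simp
    linear_combination h
  rw [c2C_eq_trialityCharge, csp_eq_trialityCharge r hu (one_div_ne_zero hpsi), ← hx,
    trialityCharge_half_sub_inv_half_sub _ hpsi]

end Coincidences

theorem stmt11_general (n m r psi t : ℝ) (h0 : psi ≠ 0) (h1 : psi ≠ 1 / 2) :
    (psi = (1 + m + n + r) / (1 + 2 * m) → t = (1 + m + n + r) / (1 + 2 * n + 2 * r) →
      1 + 2 * m ≠ 0 → c2C n m psi = csp r t) ∧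
    (psi = (1 + m + n) / (1 + 2 * m + 2 * r) →
      t = (1 + 2 * m + 2 * r) / (2 * (2 * r - 2 * n - 1)) →
      1 + 2 * m + 2 * r ≠ 0 → c2C n m psi = csp r t) ∧
    (psi = (1 + 2 * m + 2 * n + 2 * r) / (2 * (2 * m - 1)) →
      t = (1 + n + r) / (1 + 2 * m + 2 * n + 2 * r) →
      2 * (2 * m - 1) ≠ 0 → c2C n m psi = csp r t) ∧
    (psi = (m + n) / (2 * (m + r)) → t = (r - n) / (2 * (m + r)) →
      2 * (m + r) ≠ 0 → c2C n m psi = csp r t) ∧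
    (psi = (m + n - r) / (2 * (m - r)) → t = (r - m - n) / (2 * (r - m)) →
      2 * (m - r) ≠ 0 → c2C n m psi = csp r t) ∧
    (psi = (1 + 2 * m + 2 * n - 2 * r) / (2 * (2 * m - 2 * r - 1)) →
      t = (1 - 2 * m + 2 * r) / (2 * (2 * r - 2 * m - 2 * n - 1)) →
      2 * (2 * m - 2 * r - 1) ≠ 0 → c2C n m psi = csp r t) := by
  have h2 : 2 * psi - 1 ≠ 0 := fun h ↦ h1 (by linear_combination h / 2)
  refine ⟨fun hpsi ht hb ↦ ?_, fun hpsi ht hb ↦ ?_, fun hpsi ht hb ↦ ?_, fun hpsi ht hb ↦ ?_,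
    fun hpsi ht hb ↦ ?_, fun hpsi ht hb ↦ ?_⟩ <;> rw [eq_div_iff hb] at hpsi
  · have ht' : t = psi / (2 * psi - 1) := by
      rw [ht, ← mul_div_mul_left psi _ hb]
      congr 1 <;> linarith
    rw [ht']
    exact c2C_eq_csp_half_sub_inv_half_sub h2 (by linarith)
  · have ht' : t = -1 / (2 * (2 * psi - 1)) := by
      rw [ht, ← mul_div_mul_left (-1) _ (neg_ne_zero.mpr hb)]
      congr 1 <;> linarith
    rw [ht']
    exact c2C_eq_csp_inv_half_sub h0 h2 (by linarith)
  · have ht' : t = (2 * psi - 1) / (4 * psi) := by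
      rw [ht, ← mul_div_mul_left (2 * psi - 1) _ (div_ne_zero hb four_ne_zero)]
      congr 1 <;> linarith
    rw [ht']
    exact c2C_eq_csp_half_sub_inv h0 (by linarith)
  · have ht' : t = 1 / 2 - psi := by
      rw [ht, div_eq_iff hb]
      linarith
    rw [ht']
    exact c2C_eq_csp_half_sub h0 (by linarith)
  · have ht' : t = psi := by
      rw [ht, ← neg_div_neg_eq, div_eq_iff (by convert hb using 1; ring)]
      linarith
    rw [ht']
    exact c2C_eq_csp_self h2 (by linarith)
  · have ht' : t = 1 / (4 * psi) := by
      rw [ht, ← mul_div_mul_left 1 _ (div_ne_zero (neg_ne_zero.mpr hb) two_ne_zero)]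
      congr 1 <;> linarith
    rw [ht']
    exact c2C_eq_csp_inv h0 h2 (by linarith)

theorem stmt11 (n m r : ℤ) (hn : 0 ≤ n) (hm : 0 ≤ m) (hr : 1 ≤ r) :
    (∀ psi t : ℝ,
      psi = (1 + (m : ℝ) + (n : ℝ) + (r : ℝ)) / (1 + 2 * (m : ℝ)) →
      t = (1 + (m : ℝ) + (n : ℝ) + (r : ℝ)) / (1 + 2 * (n : ℝ) + 2 * (r : ℝ)) →
      (1 + 2 * (m : ℝ)) ≠ 0 →
      (1 + 2 * (n : ℝ) + 2 * (r : ℝ)) ≠ 0 →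
      psi ≠ 0 →
      psi ≠ 1 / 2 →
      t ≠ 0 →
      c2C (n : ℝ) (m : ℝ) psi = csp (r : ℝ) t) ∧
    (∀ psi t : ℝ,
      psi = (1 + (m : ℝ) + (n : ℝ)) / (1 + 2 * (m : ℝ) + 2 * (r : ℝ)) →
      t = (1 + 2 * (m : ℝ) + 2 * (r : ℝ)) / (2 * (2 * (r : ℝ) - 2 * (n : ℝ) - 1)) →
      (1 + 2 * (m : ℝ) + 2 * (r : ℝ)) ≠ 0 →
      (2 * (2 * (r : ℝ) - 2 * (n : ℝ) - 1)) ≠ 0 →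
      psi ≠ 0 →
      psi ≠ 1 / 2 →
      t ≠ 0 →
      c2C (n : ℝ) (m : ℝ) psi = csp (r : ℝ) t) ∧
    (∀ psi t : ℝ,
      psi = (1 + 2 * (m : ℝ) + 2 * (n : ℝ) + 2 * (r : ℝ)) / (2 * (2 * (m : ℝ) - 1)) →
      t = (1 + (n : ℝ) + (r : ℝ)) / (1 + 2 * (m : ℝ) + 2 * (n : ℝ) + 2 * (r : ℝ)) →
      (2 * (2 * (m : ℝ) - 1)) ≠ 0 →
      (1 + 2 * (m : ℝ) + 2 * (n : ℝ) + 2 * (r : ℝ)) ≠ 0 →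
      psi ≠ 0 →
      psi ≠ 1 / 2 →
      t ≠ 0 →
      c2C (n : ℝ) (m : ℝ) psi = csp (r : ℝ) t) ∧
    (∀ psi t : ℝ,
      psi = ((m : ℝ) + (n : ℝ)) / (2 * ((m : ℝ) + (r : ℝ))) →
      t = ((r : ℝ) - (n : ℝ)) / (2 * ((m : ℝ) + (r : ℝ))) →
      (2 * ((m : ℝ) + (r : ℝ))) ≠ 0 →
      psi ≠ 0 →
      psi ≠ 1 / 2 →
      t ≠ 0 →
      c2C (n : ℝ) (m : ℝ) psi = csp (r : ℝ) t) ∧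
    (∀ psi t : ℝ,
      psi = ((m : ℝ) + (n : ℝ) - (r : ℝ)) / (2 * ((m : ℝ) - (r : ℝ))) →
      t = ((r : ℝ) - (m : ℝ) - (n : ℝ)) / (2 * ((r : ℝ) - (m : ℝ))) →
      (2 * ((m : ℝ) - (r : ℝ))) ≠ 0 →
      (2 * ((r : ℝ) - (m : ℝ))) ≠ 0 →
      r ≠ m →
      psi ≠ 0 →
      psi ≠ 1 / 2 →
      t ≠ 0 →
      c2C (n : ℝ) (m : ℝ) psi = csp (r : ℝ) t) ∧
    (∀ psi t : ℝ,
      psi = (1 + 2 * (m : ℝ) + 2 * (n : ℝ) - 2 * (r : ℝ)) / (2 * (2 * (m : ℝ) - 2 * (r : ℝ) - 1)) →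
      t = (1 - 2 * (m : ℝ) + 2 * (r : ℝ)) / (2 * (2 * (r : ℝ) - 2 * (m : ℝ) - 2 * (n : ℝ) - 1)) →
      (2 * (2 * (m : ℝ) - 2 * (r : ℝ) - 1)) ≠ 0 →
      (2 * (2 * (r : ℝ) - 2 * (m : ℝ) - 2 * (n : ℝ) - 1)) ≠ 0 →
      psi ≠ 0 →
      psi ≠ 1 / 2 →
      t ≠ 0 →
      c2C (n : ℝ) (m : ℝ) psi = csp (r : ℝ) t) := by
  and_intros <;> intro psi t <;> intros <;>
    obtain ⟨_, _, _, _, _, _⟩ := stmt11_general n m r psi t ‹_› ‹_› <;> solve_by_elim
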